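/- (Rabinowitsch step, one variable) Let I be a left ideal of ℍ[x] and let F ∈ ℍ[x] vanish on 𝓥(I). Then the left ideal of ℍ[x][y] (y a second central indeterminate, commuting with x and with ℍ[x]) generated by I together with the polynomial F·y - 1 is all of ℍ[x][y]. -/

import Mathlib

/-!
Write `D` for the coefficient ring `ℍ`. Let `J` be the left ideal generated by `I` and `F * y - 1`,
and let `L` be its contraction to `D[x]`. As `y` is central, `r * F ∈ L` implies `r ∈ L`: modulo
`J`, `r` equals `r * F * y = y * (r * F)`. So the annihilator of the class of `F` in `D[x] ⧸ L` lies
in `L`, the annihilator of the class of `1`. Unless `L = 0`, which forces `F = 0` and so `1 ∈ L`,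
the module `D[x] ⧸ L` has finite length, so the class of `F` generates it as well: `r * F - 1 ∈ L`
for some `r`. If `L` were proper it would have a zero `p`; then `F(p) = 0` because `I ≤ L`, and
evaluating `r * F - 1` at `p` gives `-1 = 0`.

All that is used about `ℍ` is that nonconstant polynomials have roots. To find one, let `x` act on
the complex vector space `ℍ[x] ⧸ ℍ[x]f`: an eigenvector splits a linear factor off `f` from the
left, and induction on the degree of the cofactor reaches a rightmost linear factor of `f`.
-/

open Polynomial

section Module

theorem span_singleton_eq_top_of_smul_eq_zero_imp {R M : Type*} [Ring R] [AddCommGroup M]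
    [Module R M] [IsArtinian R M] [IsNoetherian R M] {v w : M} (hv : Submodule.span R {v} = ⊤)
    (hwv : ∀ r : R, r • w = 0 → r • v = 0) : Submodule.span R {w} = ⊤ := by
  by_contra hw
  let φ := LinearMap.toSpanSingleton R M w
  let ψ : (R ⧸ φ.ker) →ₗ[R] M := φ.ker.liftQ (LinearMap.toSpanSingleton R M v) hwv
  have hψ : Function.Surjective ψ := by
    rw [← LinearMap.range_eq_top, ← hv, ← LinearMap.range_toSpanSingleton]
    exact Submodule.range_liftQ _ _ hwv
  have hlt : Module.length R M < Module.length R M := calc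
    Module.length R M ≤ Module.length R (R ⧸ φ.ker) := Module.length_le_of_surjective ψ hψ
    _ = Module.length R φ.range := φ.quotKerEquivRange.length_eq
    _ = Module.length R (Submodule.span R {w}) := by rw [LinearMap.range_toSpanSingleton]
    _ < Module.length R M := Submodule.length_lt hw
  exact hlt.false

theorem exists_mul_sub_one_mem_of_mul_mem_imp {R : Type*} [Ring R] {L : Ideal R}
    [IsArtinian R (R ⧸ L)] [IsNoetherian R (R ⧸ L)] {a : R} (ha : ∀ r, r * a ∈ L → r ∈ L) :
    ∃ r, r * a - 1 ∈ L := by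
  have h_one : Submodule.span R {L.mkQ 1} = ⊤ := by
    rw [← Set.image_singleton, ← Submodule.map_span, ← Ideal.span, Ideal.span_singleton_one,
      Submodule.map_top, Submodule.range_mkQ]
  have h_a : Submodule.span R {L.mkQ a} = ⊤ := by
    refine span_singleton_eq_top_of_smul_eq_zero_imp h_one fun r hr => ?_
    rw [← map_smul, Submodule.mkQ_apply, Submodule.Quotient.mk_eq_zero] at hr ⊢
    simpa using ha r hr
  obtain ⟨r, hr⟩ := Submodule.mem_span_singleton.1 (h_a ▸ Submodule.mem_top : L.mkQ 1 ∈ _)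
  exact ⟨r, (Submodule.Quotient.eq L).1 hr⟩

end Module

section Ring

variable {R : Type*}

theorem eval_mul_eq_zero_of_eval_right_eq_zero [Semiring R] {g : R[X]} {a : R}
    (hg : g.eval a = 0) (f : R[X]) : (f * g).eval a = 0 := by
  induction f using Polynomial.induction_on' with
  | add f₁ f₂ h₁ h₂ => rw [add_mul, eval_add, h₁, h₂, add_zero]
  | monomial n c =>
    rw [← C_mul_X_pow_eq_monomial, mul_assoc, eval_C_mul, X_pow_mul, eval_mul_X_pow, hg, zero_mul,
      mul_zero]

variable [Ring R]

theorem C_mem_of_C_mul_mem {J : Ideal R[X]} {a r : R} (ha : C a * X - 1 ∈ J)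
    (hra : C (r * a) ∈ J) : C r ∈ J := by
  have hX : C r * (C a * X) ∈ J := by
    rw [← mul_assoc, ← C_mul, ← X_mul_C]
    exact J.mul_mem_left X hra
  simpa [mul_sub] using J.sub_mem hX (J.mul_mem_left (C r) ha)

theorem exists_degree_sub_mul_lt [Nontrivial R] {g : R[X]} (hg : IsUnit g.leadingCoeff)
    (f : R[X]) : ∃ q, (f - q * g).degree < g.degree := by
  obtain ⟨q, hq⟩ : ∃ q, ∀ q', (f - q * g).degree ≤ (f - q' * g).degree :=
    ⟨_, fun q' => Function.argmin_le (fun q => (f - q * g).degree) q'⟩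
  refine ⟨q, ?_⟩
  by_contra! hdeg
  set h := f - q * g with h_def
  have hg0 : g ≠ 0 := leadingCoeff_ne_zero.1 hg.ne_zero
  have hh0 : h ≠ 0 := fun h0 => hg0 (degree_eq_bot.1 (by simpa [h0] using hdeg))
  let a := h.leadingCoeff * ↑hg.unit⁻¹
  let s := C a * X ^ (h.natDegree - g.natDegree)
  have hag : a * g.leadingCoeff = h.leadingCoeff := by
    rw [mul_assoc, hg.val_inv_mul, mul_one]
  have ha0 : a ≠ 0 := fun ha => leadingCoeff_ne_zero.2 hh0 (by rw [← hag, ha, zero_mul])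
  have hs_lead : s.leadingCoeff * g.leadingCoeff = h.leadingCoeff := by
    rw [leadingCoeff_C_mul_X_pow, hag]
  have hs_ne : s.leadingCoeff * g.leadingCoeff ≠ 0 := hs_lead ▸ leadingCoeff_ne_zero.2 hh0
  have hs_deg : h.degree = (s * g).degree := by
    rw [degree_mul' hs_ne, degree_C_mul_X_pow _ ha0, degree_eq_natDegree hg0,
      degree_eq_natDegree hh0, ← Nat.cast_add, Nat.sub_add_cancel (natDegree_le_natDegree hdeg)]
  have hlt : (h - s * g).degree < h.degree :=
    degree_sub_lt_left hs_deg hh0 (by rw [leadingCoeff_mul' hs_ne, hs_lead])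
  rw [h_def, sub_sub, ← add_mul] at hlt
  exact (hq (q + s)).not_gt hlt

theorem finite_quotient_of_isUnit_leadingCoeff {L : Ideal R[X]} {g : R[X]} (hgL : g ∈ L)
    (hg : IsUnit g.leadingCoeff) : Module.Finite R (R[X] ⧸ L) := by
  nontriviality R
  have : Module.Finite R (degreeLT R g.natDegree) := .equiv (degreeLTEquiv R g.natDegree).symm
  refine .of_surjective
    ((L.mkQ.restrictScalars R).comp (degreeLT R g.natDegree).subtype) fun v => ?_
  obtain ⟨f, rfl⟩ := L.mkQ_surjective v
  obtain ⟨q, hq⟩ := exists_degree_sub_mul_lt hg f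
  refine ⟨⟨f - q * g, mem_degreeLT.2 (hq.trans_le degree_le_natDegree)⟩, ?_⟩
  refine (Submodule.Quotient.eq L).2 ?_
  simpa using L.mul_mem_left q hgL

theorem exists_X_mul_sub_smul_mem (K : Type*) [Field K] [IsAlgClosed K] [Module K R]
    [IsScalarTower K R R] {L : Ideal R[X]} (hL : L ≠ ⊤) [Module.Finite K (R[X] ⧸ L)] :
    ∃ c : K, ∃ r ∉ L, X * r - c • r ∈ L := by
  have : Nontrivial (R[X] ⧸ L) := Submodule.Quotient.nontrivial_iff.2 hL
  let T : (R[X] ⧸ L) →ₗ[K] (R[X] ⧸ L) :=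
    { toFun v := (X : R[X]) • v
      map_add' := smul_add X
      map_smul' c v := by
        obtain ⟨f, rfl⟩ := L.mkQ_surjective v
        have hf : (X : R[X]) • c • f = c • (X : R[X]) • f := by
          simp only [smul_eq_mul, X_mul, smul_mul_assoc]
        exact congrArg L.mkQ hf }
  obtain ⟨c, hc⟩ := Module.End.exists_eigenvalue T
  obtain ⟨v, hv⟩ := hc.exists_hasEigenvector
  obtain ⟨r, rfl⟩ := L.mkQ_surjective v
  exact ⟨c, r, fun hr => hv.2 ((Submodule.Quotient.mk_eq_zero L).2 hr),
    (Submodule.Quotient.eq L).1 hv.apply_eq_smul⟩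

end Ring

section DivisionRing

variable {D : Type*} [DivisionRing D]

theorem finite_quotient_of_ne_bot {L : Ideal D[X]} (hL : L ≠ ⊥) :
    Module.Finite D (D[X] ⧸ L) := by
  obtain ⟨g, hgL, hg0⟩ := Submodule.exists_mem_ne_zero_of_ne_bot hL
  exact finite_quotient_of_isUnit_leadingCoeff hgL (leadingCoeff_ne_zero.2 hg0).isUnit

theorem isArtinian_quotient_of_ne_bot {L : Ideal D[X]} (hL : L ≠ ⊥) :
    IsArtinian D[X] (D[X] ⧸ L) :=
  have := finite_quotient_of_ne_bot hL
  isArtinian_of_tower D inferInstance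

instance isPrincipalIdealRing_polynomial : IsPrincipalIdealRing D[X] where
  principal L := by
    obtain rfl | hL := eq_or_ne L ⊥
    · exact bot_isPrincipal
    obtain ⟨g, ⟨hgL, hg0⟩, hmin⟩ := exists_minimalFor_of_wellFoundedLT
      (fun g => g ∈ L ∧ g ≠ 0) degree (Submodule.exists_mem_ne_zero_of_ne_bot hL)
    refine ⟨g, le_antisymm (fun f hf => ?_) ((Ideal.span_singleton_le_iff_mem L).2 hgL)⟩
    obtain ⟨q, hq⟩ := exists_degree_sub_mul_lt (leadingCoeff_ne_zero.2 hg0).isUnit f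
    have hmem : f - q * g ∈ L := L.sub_mem hf (L.mul_mem_left q hgL)
    have hzero : f - q * g = 0 := by
      by_contra hne
      exact (hmin ⟨hmem, hne⟩ hq.le).not_gt hq
    exact Submodule.mem_span_singleton.2 ⟨q, (sub_eq_zero.1 hzero).symm⟩

theorem exists_eq_X_sub_C_mul_of_mem_span {f g : D[X]} {a : D} (hg : g ≠ 0)
    (hdeg : g.degree < f.degree) (hmem : (X - C a) * g ∈ Ideal.span {f}) :
    ∃ (a' : D) (g' : D[X]), f = (X - C a') * g' := by
  obtain ⟨s, hs : s * f = (X - C a) * g⟩ := Submodule.mem_span_singleton.1 hmem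
  obtain ⟨hs0, hf0⟩ : s ≠ 0 ∧ f ≠ 0 := mul_ne_zero_iff.1 (hs ▸ mul_ne_zero (X_sub_C_ne_zero a) hg)
  have hs_deg : s.natDegree = 0 := by
    have h := congrArg natDegree hs
    rw [natDegree_mul hs0 hf0, natDegree_mul (X_sub_C_ne_zero a) hg, natDegree_X_sub_C] at h
    have := natDegree_lt_natDegree hg hdeg
    lia
  obtain ⟨b, rfl⟩ := natDegree_eq_zero.1 hs_deg
  have hb : b ≠ 0 := C_ne_zero.1 hs0
  refine ⟨b⁻¹ * a * b, C b⁻¹ * g, ?_⟩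
  calc
    f = C b⁻¹ * (C b * f) := by rw [← mul_assoc, ← C_mul, inv_mul_cancel₀ hb, C_1, one_mul]
    _ = C b⁻¹ * X * g - C (b⁻¹ * a) * g := by rw [hs, sub_mul, mul_sub, C_mul, mul_assoc, mul_assoc]
    _ = (X - C (b⁻¹ * a * b)) * (C b⁻¹ * g) := by
      rw [sub_mul, ← mul_assoc, ← mul_assoc, X_mul_C, ← C_mul, mul_assoc _ b,
        mul_inv_cancel₀ hb, mul_one]

theorem exists_eq_X_sub_C_mul (K : Type*) [Field K] [IsAlgClosed K] [Module K D]
    [IsScalarTower K D D] [Module.Finite K D] {f : D[X]} (hf : f.natDegree ≠ 0) :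
    ∃ (a : D) (g : D[X]), f = (X - C a) * g := by
  have hf0 : f ≠ 0 := ne_zero_of_natDegree_gt (Nat.pos_of_ne_zero hf)
  have h_bot : Ideal.span {f} ≠ ⊥ := mt Ideal.span_singleton_eq_bot.1 hf0
  have h_top : Ideal.span {f} ≠ ⊤ := fun h => by
    obtain ⟨q, hq : q * f = 1⟩ := Submodule.mem_span_singleton.1 ((Ideal.eq_top_iff_one _).1 h)
    exact hf (natDegree_eq_zero_of_isUnit (.of_mul_eq_one_right q hq))
  have := finite_quotient_of_ne_bot h_bot
  have : Module.Finite K (D[X] ⧸ Ideal.span {f}) := .trans D _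
  obtain ⟨c, r, hr, hcr⟩ := exists_X_mul_sub_smul_mem K h_top
  obtain ⟨q, hq⟩ := exists_degree_sub_mul_lt (leadingCoeff_ne_zero.2 hf0).isUnit r
  have hqf : q * f ∈ Ideal.span {f} := Ideal.mul_mem_left _ q (Ideal.mem_span_singleton_self f)
  refine exists_eq_X_sub_C_mul_of_mem_span (g := r - q * f) (a := c • 1) ?_ hq ?_
  · exact fun h => hr (sub_eq_zero.1 h ▸ hqf)
  · rw [mul_sub, sub_mul _ _ r, ← smul_eq_C_mul, smul_one_smul]
    exact Ideal.sub_mem _ hcr (Ideal.mul_mem_left _ _ hqf)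

end DivisionRing

/-- Right algebraic closedness: every nonconstant polynomial `∑ cᵢ xⁱ` has a right root, that is, a
`p` with `∑ cᵢ pⁱ = 0`. The powers of `p` stand to the right of the coefficients, as in
`Polynomial.eval`. -/
class IsRightAlgClosed (R : Type*) [Semiring R] : Prop where
  exists_eval_eq_zero (f : R[X]) : f.natDegree ≠ 0 → ∃ p, f.eval p = 0

namespace IsRightAlgClosed

theorem eq_zero_of_forall_eval_eq_zero {R : Type*} [Semiring R] [Nontrivial R] [IsRightAlgClosed R]
    {f : R[X]} (hf : ∀ p, f.eval p = 0) : f = 0 := by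
  have hdeg : f.natDegree = 0 := by
    by_contra hdeg
    obtain ⟨p, hp⟩ := exists_eval_eq_zero (f + C 1) (by rwa [natDegree_add_C])
    simp [hf] at hp
  obtain ⟨a, rfl⟩ := natDegree_eq_zero.1 hdeg
  rw [← eval_C (x := 0) (a := a), hf, C_0]

variable {D : Type*} [DivisionRing D]

theorem exists_forall_mem_eval_eq_zero [IsRightAlgClosed D] {L : Ideal D[X]} (hL : L ≠ ⊤) :
    ∃ p : D, ∀ f ∈ L, f.eval p = 0 := by
  obtain ⟨g, rfl⟩ := (IsPrincipalIdealRing.principal L).principal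
  suffices ∃ p, g.eval p = 0 by
    obtain ⟨p, hp⟩ := this
    refine ⟨p, fun f hf => ?_⟩
    obtain ⟨q, rfl⟩ := Submodule.mem_span_singleton.1 hf
    exact eval_mul_eq_zero_of_eval_right_eq_zero hp q
  by_cases hdeg : g.natDegree = 0
  · obtain ⟨a, rfl⟩ := natDegree_eq_zero.1 hdeg
    obtain rfl : a = 0 := by
      by_contra ha
      exact hL (Ideal.eq_top_of_isUnit_mem _ (Ideal.mem_span_singleton_self _)
        (isUnit_C.2 (Ne.isUnit ha)))
    exact ⟨0, by simp⟩
  · exact exists_eval_eq_zero g hdeg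

theorem of_finite (K : Type*) [Field K] [IsAlgClosed K] [Module K D] [IsScalarTower K D D]
    [Module.Finite K D] : IsRightAlgClosed D where
  exists_eval_eq_zero f hf := by
    induction hn : f.natDegree using Nat.strong_induction_on generalizing f with
    | _ n ih =>
      obtain ⟨a, g, rfl⟩ := exists_eq_X_sub_C_mul K hf
      by_cases hg : g.natDegree = 0
      · obtain ⟨u, rfl⟩ := natDegree_eq_zero.1 hg
        have hu : u ≠ 0 := by
          rintro rfl
          simp at hf
        refine ⟨u⁻¹ * a * u, ?_⟩
        rw [sub_mul, X_mul_C, ← C_mul, eval_sub, eval_C_mul, eval_X, eval_C, ← mul_assoc,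
          ← mul_assoc, mul_inv_cancel₀ hu, one_mul, sub_self]
      · have hlt : g.natDegree < n := by
          rw [← hn, natDegree_mul (X_sub_C_ne_zero a) (by rintro rfl; simp at hg),
            natDegree_X_sub_C]
          lia
        obtain ⟨p, hp⟩ := ih _ hlt g hg rfl
        exact ⟨p, eval_mul_eq_zero_of_eval_right_eq_zero hp _⟩

end IsRightAlgClosed

instance isRightAlgClosed_quaternion : IsRightAlgClosed (Quaternion ℝ) := by
  let : Module ℂ (Quaternion ℝ) := .compHom _ (Quaternion.ofComplex : ℂ →ₐ[ℝ] _).toRingHom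
  have : IsScalarTower ℝ ℂ (Quaternion ℝ) :=
    ⟨fun a z q => by
      change Quaternion.ofComplex (a • z) * q = a • (Quaternion.ofComplex z * q)
      rw [map_smul, smul_mul_assoc]⟩
  have : IsScalarTower ℂ (Quaternion ℝ) (Quaternion ℝ) := ⟨fun z p q => mul_assoc _ p q⟩
  have : Module.Finite ℂ (Quaternion ℝ) := .of_restrictScalars_finite ℝ ℂ _
  exact .of_finite ℂ

theorem rabinowitsch_step_general {D : Type*} [DivisionRing D] [IsRightAlgClosed D]
    (I : Ideal D[X]) (F : D[X])
    (hF : ∀ p : D, (∀ G ∈ I, G.eval p = 0) → F.eval p = 0) :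
    Ideal.span ((C '' (I : Set D[X])) ∪ {C F * X - 1}) = (⊤ : Ideal D[X][X]) := by
  set J : Ideal D[X][X] := Ideal.span ((C '' (I : Set D[X])) ∪ {C F * X - 1})
  let L : Ideal D[X] := J.comap C
  have hIL : I ≤ L := fun G hG => Ideal.subset_span (.inl ⟨G, hG, rfl⟩)
  have hL : ∀ r, r * F ∈ L → r ∈ L := fun r =>
    C_mem_of_C_mul_mem (Ideal.subset_span (.inr rfl))
  by_contra hJ
  have hL_top : L ≠ ⊤ := mt Ideal.comap_eq_top_iff.1 hJ
  obtain ⟨p, hp⟩ := IsRightAlgClosed.exists_forall_mem_eval_eq_zero hL_top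
  have hFp : F.eval p = 0 := hF p fun G hG => hp G (hIL hG)
  have hL_bot : L ≠ ⊥ := by
    intro h
    have hF0 : F = 0 := IsRightAlgClosed.eq_zero_of_forall_eval_eq_zero fun a => hF a fun G hG => by
      obtain rfl : G = 0 := (Submodule.mem_bot _).1 (h ▸ hIL hG)
      exact eval_zero
    exact hL_top ((Ideal.eq_top_iff_one L).2 (hL 1 (by simp [hF0])))
  have := isArtinian_quotient_of_ne_bot hL_bot
  obtain ⟨r, hr⟩ := exists_mul_sub_one_mem_of_mul_mem_imp hL
  have hrp := hp _ hr
  simp [eval_mul_eq_zero_of_eval_right_eq_zero hFp] at hrp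

theorem rabinowitsch_step (I : Ideal (Polynomial (Quaternion ℝ)))
    (F : Polynomial (Quaternion ℝ))
    (hF : ∀ p : Quaternion ℝ, (∀ G ∈ I, G.eval p = 0) → F.eval p = 0) :
    Ideal.span ((Polynomial.C '' (I : Set (Polynomial (Quaternion ℝ)))) ∪
        {Polynomial.C F * Polynomial.X - 1}) =
      (⊤ : Ideal (Polynomial (Polynomial (Quaternion ℝ)))) :=
  rabinowitsch_step_general I F hF
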